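/- For every real x > 0, ∫_{−1}^{1} (μ/√(1 − μ²)) · exp(x(1 − μ²)/2) · erfi(√(x/2)·(μ + 1)) dμ = √(π/(2x)) · (exp(x) · I_0(x) − 1). -/

import Mathlib

open MeasureTheory Real intervalIntegral

/-- Modified Bessel function of the first kind of integer order `n`. -/
noncomputable def besselI (n : ℕ) (x : ℝ) : ℝ :=
  ∑' k : ℕ, (x / 2) ^ (n + 2 * k) / (Nat.factorial k * Nat.factorial (n + k))

/-- The imaginary error function `erfi(z) = (2/√π) ∫₀ᶻ exp(u²) du`. -/
noncomputable def erfi (z : ℝ) : ℝ :=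
  (2 / Real.sqrt Real.pi) * ∫ u in (0:ℝ)..z, Real.exp (u ^ 2)

/-!
The substitution `μ = cos θ` removes the weight `1 / √(1 - μ²)`, and with `x = 2r²` the
exponential and error-function factors become `exp(r² sin² θ)` and `erfi(r(1 + cos θ))`. The
resulting integrand, multiplied by `r` and corrected by
`(exp(2r²(1 + cos θ)) - 1) / (2√π)`, is the density of a conservation law: its `r`-derivative is
the `θ`-derivative of a flux proportional to `sin θ`. The flux vanishes at `θ = 0` and `θ = π`, so
the total mass on `[0, π]` does not depend on `r`, and it is zero at `r = 0`. What remains is the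
integral of the correction, which is Bessel's integral `∫₀^π exp(x cos θ) dθ = π I₀(x)`.
-/

section ConservationLaw

open Set

variable {E : Type*} [NormedAddCommGroup E] [NormedSpace ℝ E] [CompleteSpace E]

theorem integral_sub_eq_integral_sub_of_hasDerivAt {ρ J D : ℝ → ℝ → E} {r₀ r₁ a b : ℝ}
    (hD : ContinuousOn (Function.uncurry D) (uIcc r₀ r₁ ×ˢ uIcc a b))
    (hρ : ∀ r ∈ uIcc r₀ r₁, ∀ θ ∈ uIcc a b, HasDerivAt (fun s ↦ ρ s θ) (D r θ) r)
    (hJ : ∀ r ∈ uIcc r₀ r₁, ∀ θ ∈ uIcc a b, HasDerivAt (J r) (D r θ) θ) :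
    ∫ θ in a..b, (ρ r₁ θ - ρ r₀ θ) = ∫ r in r₀..r₁, (J r b - J r a) := by
  have hD_int : IntegrableOn (Function.uncurry D) (uIoc r₀ r₁ ×ˢ uIoc a b) :=
    (hD.integrableOn_compact (isCompact_uIcc.prod isCompact_uIcc)).mono_set
      (prod_mono uIoc_subset_uIcc uIoc_subset_uIcc)
  calc ∫ θ in a..b, (ρ r₁ θ - ρ r₀ θ)
      = ∫ θ in a..b, ∫ r in r₀..r₁, D r θ :=
        integral_congr fun θ hθ ↦ (integral_eq_sub_of_hasDerivAt
          (fun r hr ↦ hρ r hr θ hθ) (hD.uncurry_right θ hθ).intervalIntegrable).symm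
    _ = ∫ r in r₀..r₁, ∫ θ in a..b, D r θ :=
        (intervalIntegral_intervalIntegral_swap hD_int).symm
    _ = ∫ r in r₀..r₁, (J r b - J r a) :=
        integral_congr fun r hr ↦ integral_eq_sub_of_hasDerivAt
          (hJ r hr) (hD.uncurry_left r hr).intervalIntegrable

end ConservationLaw

section CosineIntegrals

theorem integral_div_sqrt_one_sub_sq (f : ℝ → ℝ) :
    ∫ μ in -1..1, f μ / √(1 - μ ^ 2) = ∫ θ in 0..π, f (cos θ) := by
  rw [← Polynomial.Chebyshev.integral_measureT_eq_integral_cos,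
    Polynomial.Chebyshev.integral_measureT]
  simp only [sqrt_inv, div_eq_mul_inv]

theorem integral_comp_cos_eq_zero_of_odd {E : Type*} [NormedAddCommGroup E] [NormedSpace ℝ E]
    {f : ℝ → E} (hf : f.Odd) : ∫ θ in 0..π, f (cos θ) = 0 := by
  have : IsAddTorsionFree E := .of_isTorsionFree ℝ E
  have reflect : ∫ θ in 0..π, f (cos (π - θ)) = ∫ θ in 0..π, f (cos θ) := by
    simpa using integral_comp_sub_left (a := 0) (b := π) (fun θ ↦ f (cos θ)) π
  simp only [cos_pi_sub, hf.eq, intervalIntegral.integral_neg] at reflect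
  exact self_eq_neg.mp reflect.symm

theorem integral_cos_pow_two_mul (k : ℕ) :
    ∫ θ in 0..π, cos θ ^ (2 * k) = π * (k.centralBinom / 4 ^ k) := by
  induction k with
  | zero => simp
  | succ k ih =>
    have centralBinom_succ : ((k + 1).centralBinom : ℝ) =
        2 * (2 * k + 1) * k.centralBinom / (k + 1) := by
      rw [eq_div_iff (by positivity), mul_comm]
      exact mod_cast k.succ_mul_centralBinom_succ
    rw [mul_add_one, integral_cos_pow, ih, centralBinom_succ, sin_pi, sin_zero]
    push_cast
    field_simp
    ring

theorem hasSum_integral_cosh_mul_cos (x : ℝ) :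
    HasSum (fun k : ℕ ↦ ∫ θ in 0..π, (x * cos θ) ^ (2 * k) / (2 * k).factorial)
      (∫ θ in 0..π, cosh (x * cos θ)) := by
  refine hasSum_integral_of_dominated_convergence
    (fun k _ ↦ x ^ (2 * k) / (2 * k).factorial)
    (fun k ↦ Continuous.aestronglyMeasurable (by fun_prop))
    (fun k ↦ .of_forall fun θ _ ↦ ?_) (.of_forall fun _ _ ↦ x.hasSum_cosh.summable)
    intervalIntegrable_const (.of_forall fun θ _ ↦ hasSum_cosh _)
  have mul_cos_sq_le : (x * cos θ) ^ 2 ≤ x ^ 2 := by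
    rw [mul_pow]
    exact mul_le_of_le_one_right (sq_nonneg x) (cos_sq_le_one θ)
  rw [pow_mul, pow_mul, norm_of_nonneg (by positivity)]
  gcongr

theorem integral_cosh_mul_cos (x : ℝ) :
    ∫ θ in 0..π, cosh (x * cos θ) = π * besselI 0 x := by
  rw [← (hasSum_integral_cosh_mul_cos x).tsum_eq, besselI, ← tsum_mul_left]
  congr 1 with k
  have centralBinom_mul : (k.centralBinom * k.factorial * k.factorial : ℝ) = (2 * k).factorial := by
    rw [Nat.centralBinom_eq_two_mul_choose]
    exact mod_cast two_mul k ▸ Nat.add_choose_mul_factorial_mul_factorial k k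
  have centralBinom_ne_zero : (k.centralBinom : ℝ) ≠ 0 := mod_cast k.centralBinom_ne_zero
  have four_pow : (4 : ℝ) ^ k = 2 ^ (2 * k) := by norm_num [pow_mul]
  simp only [mul_pow, intervalIntegral.integral_div, intervalIntegral.integral_const_mul,
    integral_cos_pow_two_mul, ← centralBinom_mul, div_pow, zero_add, four_pow]
  field_simp

theorem integral_exp_mul_cos (x : ℝ) :
    ∫ θ in 0..π, exp (x * cos θ) = π * besselI 0 x := by
  have sinh_odd : Function.Odd fun u ↦ sinh (x * u) := fun u ↦ by simp
  simp only [← cosh_add_sinh]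
  rw [intervalIntegral.integral_add (Continuous.intervalIntegrable (by fun_prop) _ _)
    (Continuous.intervalIntegrable (by fun_prop) _ _), integral_cosh_mul_cos,
    integral_comp_cos_eq_zero_of_odd sinh_odd, add_zero]

theorem integral_exp_mul_one_add_cos (x : ℝ) :
    ∫ θ in 0..π, exp (x * (1 + cos θ)) = π * (exp x * besselI 0 x) := by
  simp only [mul_one_add, exp_add, intervalIntegral.integral_const_mul, integral_exp_mul_cos]
  ring

end CosineIntegrals

theorem hasDerivAt_erfi (z : ℝ) : HasDerivAt erfi (2 / √π * exp (z ^ 2)) z :=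
  ((show Continuous fun u : ℝ ↦ exp (u ^ 2) by fun_prop).integral_hasStrictDerivAt
    0 z).hasDerivAt.const_mul (2 / √π)

@[fun_prop]
theorem continuous_erfi : Continuous erfi :=
  continuous_iff_continuousAt.2 fun z ↦ (hasDerivAt_erfi z).continuousAt

/-- The conserved density: `r` times the integrand of the theorem at `x = 2r²`, `μ = cos θ`, minus
a correction, normalised to vanish at `r = 0`. The correction absorbs the difference between the
`r`-derivative of the first term and the `θ`-derivative of `erfiFlux`, which
`cos θ * (1 + cos θ) + sin θ ^ 2 = 1 + cos θ` reduces to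
`2 / √π * r * (1 + cos θ) * exp (2 * r ^ 2 * (1 + cos θ))`. -/
noncomputable def erfiDensity (r θ : ℝ) : ℝ :=
  r * cos θ * exp (r ^ 2 * sin θ ^ 2) * erfi (r * (1 + cos θ)) -
    (exp (2 * r ^ 2 * (1 + cos θ)) - 1) / (2 * √π)

/-- The flux through `θ` in the conservation law for `erfiDensity`, vanishing at `0` and `π`. It is
signed so that the law reads `∂ erfiDensity / ∂r = ∂ erfiFlux / ∂θ`. -/
noncomputable def erfiFlux (r θ : ℝ) : ℝ :=
  sin θ * exp (r ^ 2 * sin θ ^ 2) * erfi (r * (1 + cos θ))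

/-- The common value of `∂ erfiDensity / ∂r` and `∂ erfiFlux / ∂θ`. -/
noncomputable def erfiRate (r θ : ℝ) : ℝ :=
  cos θ * (1 + 2 * r ^ 2 * sin θ ^ 2) * exp (r ^ 2 * sin θ ^ 2) * erfi (r * (1 + cos θ)) -
    2 / √π * r * sin θ ^ 2 * exp (2 * r ^ 2 * (1 + cos θ))

theorem exp_two_mul_sq_mul_one_add_cos (r θ : ℝ) :
    exp (2 * r ^ 2 * (1 + cos θ)) = exp (r ^ 2 * sin θ ^ 2) * exp ((r * (1 + cos θ)) ^ 2) := by
  rw [← exp_add, sin_sq]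
  ring_nf

theorem hasDerivAt_erfiDensity (r θ : ℝ) :
    HasDerivAt (fun s ↦ erfiDensity s θ) (erfiRate r θ) r := by
  have sq : HasDerivAt (fun s : ℝ ↦ s ^ 2) (2 * r) r := by simpa using hasDerivAt_pow 2 r
  have gauss := (sq.mul_const (sin θ ^ 2)).exp
  have erfi_factor := (hasDerivAt_erfi (r * (1 + cos θ))).comp r
    ((hasDerivAt_id r).mul_const (1 + cos θ))
  have correction :=
    ((((sq.const_mul 2).mul_const (1 + cos θ)).exp.sub_const 1).div_const (2 * √π))
  refine (((((hasDerivAt_id r).mul_const (cos θ)).mul gauss).mul erfi_factor).sub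
    correction).congr_deriv ?_
  simp only [erfiRate, exp_two_mul_sq_mul_one_add_cos, Function.comp, id, Pi.mul_apply, sin_sq]
  field_simp
  ring

theorem hasDerivAt_erfiFlux (r θ : ℝ) : HasDerivAt (erfiFlux r) (erfiRate r θ) θ := by
  have gauss := (((hasDerivAt_sin θ).pow 2).const_mul (r ^ 2)).exp
  have erfi_factor := (hasDerivAt_erfi (r * (1 + cos θ))).comp θ
    (((hasDerivAt_cos θ).const_add 1).const_mul r)
  refine (((hasDerivAt_sin θ).mul gauss).mul erfi_factor).congr_deriv ?_
  simp only [erfiRate, exp_two_mul_sq_mul_one_add_cos, Function.comp, Pi.mul_apply, Pi.pow_apply]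
  push_cast
  ring

theorem continuous_erfiRate : Continuous (Function.uncurry erfiRate) := by
  unfold Function.uncurry erfiRate
  fun_prop

theorem integral_erfiDensity (r : ℝ) : ∫ θ in 0..π, erfiDensity r θ = 0 := by
  simpa [erfiDensity, erfiFlux] using integral_sub_eq_integral_sub_of_hasDerivAt
    (r₀ := 0) (r₁ := r) (a := 0) (b := π) continuous_erfiRate.continuousOn
    (fun s _ θ _ ↦ hasDerivAt_erfiDensity s θ) (fun s _ θ _ ↦ hasDerivAt_erfiFlux s θ)

theorem integral_cos_mul_exp_mul_erfi (r : ℝ) :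
    ∫ θ in 0..π, r * cos θ * exp (r ^ 2 * sin θ ^ 2) * erfi (r * (1 + cos θ)) =
      √π / 2 * (exp (2 * r ^ 2) * besselI 0 (2 * r ^ 2) - 1) := by
  have correction : ∫ θ in 0..π, (exp (2 * r ^ 2 * (1 + cos θ)) - 1) / (2 * √π) =
      √π / 2 * (exp (2 * r ^ 2) * besselI 0 (2 * r ^ 2) - 1) := by
    rw [intervalIntegral.integral_div, intervalIntegral.integral_sub
      (Continuous.intervalIntegrable (by fun_prop) _ _) intervalIntegrable_const,
      integral_exp_mul_one_add_cos, intervalIntegral.integral_const, sub_zero, smul_eq_mul]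
    field_simp
    rw [sq_sqrt pi_pos.le]
    ring
  rw [← correction, ← sub_eq_zero, ← intervalIntegral.integral_sub
    (Continuous.intervalIntegrable (by fun_prop) _ _)
    (Continuous.intervalIntegrable (by fun_prop) _ _)]
  exact integral_erfiDensity r

/-- `∫_{−1}^{1} (μ/√(1−μ²)) e^(x(1−μ²)/2) erfi(√(x/2)(μ+1)) dμ
  = √(π/(2x)) (eˣ I₀(x) − 1)` for `x > 0`. -/
theorem integral_erfi_eq_exp_besselI_sub_one (x : ℝ) (hx : 0 < x) :
    (∫ μ in (-1 : ℝ)..1,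
        (μ / Real.sqrt (1 - μ ^ 2)) * Real.exp (x * (1 - μ ^ 2) / 2) *
          erfi (Real.sqrt (x / 2) * (μ + 1))) =
      Real.sqrt (Real.pi / (2 * x)) * (Real.exp x * besselI 0 x - 1) := by
  obtain ⟨r, hr, rfl⟩ : ∃ r > 0, x = 2 * r ^ 2 :=
    ⟨√(x / 2), by positivity, by rw [sq_sqrt (by positivity)]; ring⟩
  have sqrt_half : √(2 * r ^ 2 / 2) = r := by
    rw [mul_div_cancel_left₀ _ two_ne_zero, sqrt_sq hr.le]
  have sqrt_prefactor : √(π / (2 * (2 * r ^ 2))) = r⁻¹ * (√π / 2) := by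
    rw [show 2 * (2 * r ^ 2) = (2 * r) ^ 2 by ring, sqrt_div pi_pos.le, sqrt_sq (by positivity)]
    field_simp
  rw [sqrt_half, sqrt_prefactor]
  calc _ = ∫ μ in -1..1, μ * exp (r ^ 2 * (1 - μ ^ 2)) * erfi (r * (1 + μ)) / √(1 - μ ^ 2) :=
        integral_congr fun μ _ ↦ by ring_nf
    _ = ∫ θ in 0..π, cos θ * exp (r ^ 2 * (1 - cos θ ^ 2)) * erfi (r * (1 + cos θ)) :=
        integral_div_sqrt_one_sub_sq _
    _ = r⁻¹ * ∫ θ in 0..π, r * cos θ * exp (r ^ 2 * sin θ ^ 2) * erfi (r * (1 + cos θ)) := by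
        rw [← intervalIntegral.integral_const_mul]
        exact integral_congr fun θ _ ↦ by simp only [sin_sq]; field_simp
    _ = r⁻¹ * (√π / 2) * (exp (2 * r ^ 2) * besselI 0 (2 * r ^ 2) - 1) := by
        rw [integral_cos_mul_exp_mul_erfi, mul_assoc]
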